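/- arXiv:2110.04840 — 5 statements merged into one kernel-verified Lean document; each statement's English description precedes it below -/
import Mathlib

section
/- Let N be a positive integer, γ, T ∈ ℝ, G : ℝ → Matrix (Fin N) (Fin N) ℝ, and let a : ℝ → ℝ^{1×N} be twice differentiable with a''(t) − γ a'(t) = a(t)·G(t) for all t. Define b : ℝ → ℝ^{1×N} by b(τ) := a(T − τ). Then b is twice differentiable and satisfies b''(τ) + γ b'(τ) = b(τ)·G(T − τ) for all τ. In particular, the time-reversed adjoint of a heavy ball ODE is again a heavy ball ODE with the same damping parameter γ. -/
open Matrix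

section TimeReversal

variable {𝕜 F : Type*} [NontriviallyNormedField 𝕜] [NormedAddCommGroup F] [NormedSpace 𝕜 F]

lemma deriv_comp_const_sub' (a : 𝕜 → F) (T : 𝕜) :
    deriv (fun τ => a (T - τ)) = fun τ => -deriv a (T - τ) :=
  funext fun τ => deriv_comp_const_sub a T τ

lemma deriv_deriv_comp_const_sub (a : 𝕜 → F) (T τ : 𝕜) :
    deriv (deriv fun τ => a (T - τ)) τ = deriv (deriv a) (T - τ) := by
  rw [deriv_comp_const_sub', deriv.fun_neg, deriv_comp_const_sub, neg_neg]

/-- Reversing time changes the sign of the first derivative but not of the second, so the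
anti-damping `-γ` becomes the damping `γ`. -/
theorem adjoint_hbnode_time_reversed_general (γ T : 𝕜) (f : 𝕜 → F → F) (a : 𝕜 → F)
    (ha : Differentiable 𝕜 a) (ha' : Differentiable 𝕜 (deriv a))
    (hode : ∀ t, deriv (deriv a) t - γ • deriv a t = f t (a t)) :
    Differentiable 𝕜 (fun τ => a (T - τ)) ∧
      Differentiable 𝕜 (deriv fun τ => a (T - τ)) ∧
      ∀ τ, deriv (deriv fun τ => a (T - τ)) τ + γ • deriv (fun τ => a (T - τ)) τ =
        f (T - τ) (a (T - τ)) := by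
  refine ⟨by fun_prop, ?_, fun τ => ?_⟩
  · rw [deriv_comp_const_sub']
    fun_prop
  · rw [deriv_deriv_comp_const_sub, deriv_comp_const_sub, smul_neg, ← sub_eq_add_neg, hode]

end TimeReversal

/-- **Time reversal of the heavy ball adjoint equation.**
If `a : ℝ → ℝ^{1×N}` is twice differentiable with `a'' - γ a' = a·G`, then
`b(τ) := a(T - τ)` is twice differentiable and satisfies
`b'' + γ b' = b·G(T - ·)`, i.e. the time-reversed adjoint of a heavy ball ODE
is again a heavy ball ODE with the same damping `γ`. -/
theorem adjoint_hbnode_time_reversed (N : ℕ) (hN : 0 < N) (γ T : ℝ)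
    (G : ℝ → Matrix (Fin N) (Fin N) ℝ)
    (a : ℝ → (Fin N → ℝ))
    (ha : Differentiable ℝ a) (ha' : Differentiable ℝ (deriv a))
    (hode : ∀ t : ℝ, deriv (deriv a) t - γ • deriv a t = a t ᵥ* G t)
    (b : ℝ → (Fin N → ℝ)) (hb : b = fun τ => a (T - τ)) :
    Differentiable ℝ b ∧ Differentiable ℝ (deriv b) ∧
      (∀ τ : ℝ, deriv (deriv b) τ + γ • deriv b τ = b τ ᵥ* G (T - τ)) := by
  subst hb
  exact adjoint_hbnode_time_reversed_general γ T (fun t x => x ᵥ* G t) a ha ha' hode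
end

section
/- Let N, p be positive integers, t₀ < T real numbers, and G : ℝ → Matrix (Fin N) (Fin N) ℝ, C : ℝ → Matrix (Fin N) (Fin p) ℝ be continuous on [t₀, T]. Suppose A : ℝ → Matrix (Fin N) (Fin N) ℝ and B : ℝ → Matrix (Fin N) (Fin p) ℝ are differentiable on [t₀, T] and satisfy A'(t) = −A(t)·G(t), B'(t) = C(t) + G(t)·B(t) on [t₀, T], with terminal condition A(T) = −1 (negative identity matrix). Then B(T) = −A(t₀)·B(t₀) + ∫_T^{t₀} A(t)·C(t) dt. -/
open Matrix

attribute [local instance] Matrix.normedAddCommGroup Matrix.normedSpace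

/-!
The equations for `A` and `B` are adjoint to each other: by the product rule the terms containing
`G` cancel in `(A B)' = (-A G) B + A (C + G B) = A C`. Integrating from `T` to `t₀` and inserting
the terminal value `A(T) = -1` gives the formula.
-/

open MeasureTheory Set

section MatrixMul

variable {l m n R : Type*} [Fintype m] [NormedRing R]

section Deriv

variable {𝕜 : Type*} [NontriviallyNormedField 𝕜] [NormedAlgebra 𝕜 R] [Finite n]
  {A : 𝕜 → Matrix l m R} {B : 𝕜 → Matrix m n R} {s : Set 𝕜} {t : 𝕜}

theorem hasDerivWithinAt_matrix_mul {A' : Matrix l m R} {B' : Matrix m n R}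
    (hA : HasDerivWithinAt A A' s t) (hB : HasDerivWithinAt B B' s t) :
    HasDerivWithinAt (fun t ↦ A t * B t) (A' * B t + A t * B') s t := by
  have := Fintype.ofFinite n
  refine hasDerivWithinAt_pi.2 fun i ↦ hasDerivWithinAt_pi.2 fun j ↦ ?_
  have hAi (k : m) : HasDerivWithinAt (fun t ↦ A t i k) (A' i k) s t :=
    hasDerivWithinAt_pi.1 (hasDerivWithinAt_pi.1 hA i) k
  have hBj (k : m) : HasDerivWithinAt (fun t ↦ B t k j) (B' k j) s t :=
    hasDerivWithinAt_pi.1 (hasDerivWithinAt_pi.1 hB k) j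
  simpa only [Matrix.add_apply, mul_apply, Finset.sum_add_distrib] using
    HasDerivWithinAt.fun_sum fun k (_ : k ∈ Finset.univ) ↦ (hAi k).fun_mul (hBj k)

theorem hasDerivWithinAt_adjoint_mul {G : Matrix m m R} {C : Matrix m n R}
    (hA : HasDerivWithinAt A (-(A t) * G) s t) (hB : HasDerivWithinAt B (C + G * B t) s t) :
    HasDerivWithinAt (fun t ↦ A t * B t) (A t * C) s t := by
  have cancel : -(A t) * G * B t + A t * (C + G * B t) = A t * C := by
    rw [Matrix.mul_add, Matrix.neg_mul, Matrix.neg_mul, Matrix.mul_assoc]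
    abel
  exact cancel ▸ hasDerivWithinAt_matrix_mul hA hB

end Deriv

theorem intervalIntegrable_matrix_mul_apply {μ : Measure ℝ} {a b : ℝ}
    {A : ℝ → Matrix l m R} {C : ℝ → Matrix m n R} {i : l} {j : n}
    (hA : ∀ k, ContinuousOn (fun t ↦ A t i k) (uIcc a b))
    (hC : ∀ k, IntervalIntegrable (fun t ↦ C t k j) μ a b) :
    IntervalIntegrable (fun t ↦ (A t * C t) i j) μ a b := by
  simpa only [mul_apply, Finset.sum_fn] using
    IntervalIntegrable.sum Finset.univ fun k _ ↦ (hC k).continuousOn_mul (hA k)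

end MatrixMul

theorem intervalIntegrable_pi_iff {ι : Type*} [Fintype ι] {E : ι → Type*}
    [∀ i, NormedAddCommGroup (E i)] {μ : Measure ℝ} {a b : ℝ} {f : ℝ → ∀ i, E i} :
    IntervalIntegrable f μ a b ↔ ∀ i, IntervalIntegrable (f · i) μ a b := by
  simp only [intervalIntegrable_iff, IntegrableOn, integrable_pi_iff]

theorem integral_eq_sub_of_hasDerivWithinAt_uIcc {E : Type*} [NormedAddCommGroup E]
    [NormedSpace ℝ E] [CompleteSpace E] {f f' : ℝ → E} {a b : ℝ}
    (hf : ∀ t ∈ uIcc a b, HasDerivWithinAt f (f' t) (uIcc a b) t)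
    (hint : IntervalIntegrable f' volume a b) :
    ∫ t in a..b, f' t = f b - f a :=
  intervalIntegral.integral_eq_sub_of_hasDeriv_right (fun t ht ↦ (hf t ht).continuousWithinAt)
    (fun t ht ↦ ((hf t (Ioo_subset_Icc_self ht)).hasDerivAt
      (Icc_mem_nhds ht.1 ht.2)).hasDerivWithinAt) hint

theorem integral_adjoint_mul_eq_sub {l m n R : Type*} [Fintype l] [Fintype m] [Fintype n]
    [NormedRing R] [NormedAlgebra ℝ R] [CompleteSpace R] {a b : ℝ}
    {A : ℝ → Matrix l m R} {B C : ℝ → Matrix m n R} {G : ℝ → Matrix m m R}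
    (hA : ∀ t ∈ uIcc a b, HasDerivWithinAt A (-(A t) * G t) (uIcc a b) t)
    (hB : ∀ t ∈ uIcc a b, HasDerivWithinAt B (C t + G t * B t) (uIcc a b) t)
    (hC : ∀ i j, IntervalIntegrable (fun t ↦ C t i j) volume a b) :
    ∫ t in a..b, A t * C t = A b * B b - A a * B a := by
  have hcA : ContinuousOn A (uIcc a b) := fun t ht ↦ (hA t ht).continuousWithinAt
  -- The topology of the norm on `Matrix l n R` is not reducibly the one that instance search
  -- finds, so normed statements are applied to the underlying function type.
  have hAC : IntervalIntegrable (ε := l → n → R) (fun t ↦ A t * C t) volume a b :=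
    intervalIntegrable_pi_iff.2 fun i ↦ intervalIntegrable_pi_iff.2 fun j ↦
      intervalIntegrable_matrix_mul_apply
        (fun k ↦ continuousOn_pi.1 (continuousOn_pi.1 hcA i) k) fun k ↦ hC k j
  exact integral_eq_sub_of_hasDerivWithinAt_uIcc (E := l → n → R)
    (fun t ht ↦ hasDerivWithinAt_adjoint_mul (hA t ht) (hB t ht)) hAC

theorem adjoint_sensitivity_integral_form_general {m n R : Type*} [Fintype m] [DecidableEq m]
    [Fintype n] [NormedRing R] [NormedAlgebra ℝ R] [CompleteSpace R] {t₀ T : ℝ}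
    {A G : ℝ → Matrix m m R} {B C : ℝ → Matrix m n R}
    (hC : ∀ i j, IntervalIntegrable (fun t ↦ C t i j) volume t₀ T)
    (hA : ∀ t ∈ uIcc t₀ T, HasDerivWithinAt A (-(A t) * G t) (uIcc t₀ T) t)
    (hB : ∀ t ∈ uIcc t₀ T, HasDerivWithinAt B (C t + G t * B t) (uIcc t₀ T) t)
    (hAT : A T = -1) :
    B T = -(A t₀) * B t₀ + ∫ t in T..t₀, A t * C t := by
  rw [intervalIntegral.integral_symm, integral_adjoint_mul_eq_sub hA hB hC, hAT, Matrix.neg_mul,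
    Matrix.neg_mul, Matrix.one_mul]
  abel

/-- **Integrated first-order adjoint sensitivity equation.**
With `A' = -A·G`, `B' = C + G·B` on `[t₀, T]` and terminal condition `A(T) = -1`,
one has `B(T) = -A(t₀)·B(t₀) + ∫_T^{t₀} A(t)·C(t) dt`. -/
theorem adjoint_sensitivity_integral_form (N p : ℕ) (hN : 0 < N) (hp : 0 < p)
    (t₀ T : ℝ) (ht : t₀ < T)
    (G : ℝ → Matrix (Fin N) (Fin N) ℝ) (C : ℝ → Matrix (Fin N) (Fin p) ℝ)
    (hG : ContinuousOn G (Set.Icc t₀ T)) (hC : ContinuousOn C (Set.Icc t₀ T))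
    (A : ℝ → Matrix (Fin N) (Fin N) ℝ) (B : ℝ → Matrix (Fin N) (Fin p) ℝ)
    (hA : ∀ t ∈ Set.Icc t₀ T, HasDerivWithinAt A (-(A t) * G t) (Set.Icc t₀ T) t)
    (hB : ∀ t ∈ Set.Icc t₀ T, HasDerivWithinAt B (C t + G t * B t) (Set.Icc t₀ T) t)
    (hAT : A T = -1) :
    B T = -(A t₀) * B t₀ + ∫ t in T..t₀, A t * C t := by
  have hCint (i : Fin N) (j : Fin p) : IntervalIntegrable (fun t ↦ C t i j) volume t₀ T :=
    (continuousOn_pi.1 (continuousOn_pi.1 hC i) j).intervalIntegrable_of_Icc ht.le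
  rw [← uIcc_of_le ht.le] at hA hB
  exact adjoint_sensitivity_integral_form_general hCint hA hB hAT
end

section
/- Let N be a positive integer, t₀ < T real numbers, and f : ℝ^N × ℝ → ℝ^N continuously differentiable. Suppose h : ℝ^N × [t₀,T] → ℝ^N is continuously differentiable in (u,t), satisfies ∂h/∂t(u,t) = f(h(u,t),t) and h(u,t₀) = u for all u in an open neighborhood of a point u₀. Let A : [t₀,T] → Matrix (Fin N) (Fin N) ℝ be differentiable with A'(t) = −A(t)·J(t), where J(t) := (∂f/∂h)(h(u₀,t),t), and terminal condition A(T) = −1 (negative identity). Then the derivative of the time-T solution map u ↦ h(u,T) at u₀ equals −A(t₀). -/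
open Matrix

attribute [local instance] Matrix.normedAddCommGroup Matrix.normedSpace

/-!
For a solution `h u` starting near `u₀`, the difference `z = h u - h u₀` satisfies
`z' = J z + o(‖z‖)` uniformly in time. The adjoint equation `A' = -A J` cancels the linear part,
`(A z)' = A (z' - J z) = o(‖z‖)`, and `z = O(‖u - u₀‖)` by a fencing argument in a tube around
`h u₀` on which `f` is Lipschitz. Hence `A(T) z(T) = A(t₀) (u - u₀) + o(‖u - u₀‖)`.
-/

open Set Metric Filter Topology

section CompactUniformity

variable {E G α : Type*} [NormedAddCommGroup E] [NormedSpace ℝ E] [NormedAddCommGroup G]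
  [NormedSpace ℝ G] [PseudoMetricSpace α] {K : Set (E × α)} {f : E → α → G}
  {f' : E × α → E →L[ℝ] G}

theorem exists_forall_norm_sub_sub_le_of_isCompact (hK : IsCompact K)
    (hf : ∀ p ∈ K, ∀ᶠ q in 𝓝 p, HasFDerivAt (fun x => f x q.2) (f' q) q.1)
    (hf' : ∀ p ∈ K, ContinuousAt f' p) {ε : ℝ} (hε : 0 < ε) :
    ∃ δ > 0, ∀ p ∈ K, ∀ x ∈ closedBall p.1 δ,
      ‖f x p.2 - f p.1 p.2 - f' p (x - p.1)‖ ≤ ε * ‖x - p.1‖ := by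
  obtain ⟨V, hV, -, hVf⟩ := lebesgue_number_of_compact_open hK isOpen_interior
    fun p hp => mem_interior_iff_mem_nhds.2 (hf p hp)
  have hVfderiv : ∀ p ∈ K, ∀ {q}, (p, q) ∈ V → HasFDerivAt (fun x => f x q.2) (f' q) q.1 :=
    fun p hp q hq => (interior_subset (hVf p hp hq) :)
  have hunif := hK.uniformContinuousAt_of_continuousAt f' hf' (dist_mem_uniformity hε)
  obtain ⟨δ, hδ, hδV⟩ := mem_uniformity_dist.1 (inter_mem hV hunif)
  refine ⟨δ / 2, half_pos hδ, fun p hp x hx => ?_⟩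
  have hnear : ∀ y ∈ closedBall p.1 (δ / 2),
      (p, (y, p.2)) ∈ V ∩ {q | q.1 ∈ K → (f' q.1, f' q.2) ∈ {r | dist r.1 r.2 < ε}} := by
    refine fun y hy => hδV ?_
    rw [Prod.dist_eq, dist_self, max_eq_left dist_nonneg, dist_comm]
    exact (mem_closedBall.1 hy).trans_lt (half_lt_self hδ)
  refine (convex_closedBall p.1 (δ / 2)).norm_image_sub_le_of_norm_hasFDerivWithin_le'
    (f := fun y => f y p.2) (f' := fun y => f' (y, p.2))
    (fun y hy => ?_) (fun y hy => ?_) (mem_closedBall_self (half_pos hδ).le) hx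
  · exact (hVfderiv p hp (hnear y hy).1).hasFDerivWithinAt
  · rw [← dist_eq_norm, dist_comm]
    exact ((hnear y hy).2 hp).le

theorem exists_forall_norm_sub_le_of_isCompact (hK : IsCompact K)
    (hf : ∀ p ∈ K, ∀ᶠ q in 𝓝 p, HasFDerivAt (fun x => f x q.2) (f' q) q.1)
    (hf' : ∀ p ∈ K, ContinuousAt f' p) :
    ∃ L ≥ 0, ∃ δ > 0, ∀ p ∈ K, ∀ x ∈ closedBall p.1 δ,
      ‖f x p.2 - f p.1 p.2‖ ≤ L * ‖x - p.1‖ := by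
  obtain ⟨δ, hδ, htaylor⟩ := exists_forall_norm_sub_sub_le_of_isCompact hK hf hf' one_pos
  obtain ⟨B, hB⟩ := hK.exists_bound_of_continuousOn fun p hp => (hf' p hp).continuousWithinAt
  refine ⟨1 + max B 0, by positivity, δ, hδ, fun p hp x hx => ?_⟩
  calc ‖f x p.2 - f p.1 p.2‖
      ≤ ‖f x p.2 - f p.1 p.2 - f' p (x - p.1)‖ + ‖f' p (x - p.1)‖ := norm_le_norm_sub_add _ _
    _ ≤ 1 * ‖x - p.1‖ + max B 0 * ‖x - p.1‖ := by
        gcongr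
        · exact htaylor p hp x hx
        · exact (f' p).le_of_opNorm_le ((hB p hp).trans (le_max_left _ _)) _
    _ = (1 + max B 0) * ‖x - p.1‖ := by ring

end CompactUniformity

section SolutionMap

variable {E F : Type*} [NormedAddCommGroup E] [NormedSpace ℝ E] [NormedAddCommGroup F]
  [NormedSpace ℝ F]

-- A Grönwall estimate whose differential inequality is only known inside a tube of radius `δ`:
-- fencing by an exponential of rate `L + 1 > L` shows that `z` cannot leave the tube.
theorem norm_le_mul_exp_of_norm_deriv_le_of_norm_le {z z' : ℝ → E} {a b L r δ : ℝ} (hL : 0 ≤ L)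
    (hz : ∀ t ∈ Icc a b, HasDerivWithinAt z (z' t) (Icc a b) t)
    (hz' : ∀ t ∈ Icc a b, ‖z t‖ ≤ δ → ‖z' t‖ ≤ L * ‖z t‖) (hr : 0 < r) (hza : ‖z a‖ ≤ r)
    (hrδ : r * Real.exp ((L + 1) * (b - a)) ≤ δ) :
    ∀ t ∈ Icc a b, ‖z t‖ ≤ r * Real.exp ((L + 1) * (t - a)) := by
  refine image_norm_le_of_norm_deriv_right_lt_deriv_boundary
    (B' := fun t => r * (Real.exp ((L + 1) * (t - a)) * (L + 1)))
    (fun t ht => (hz t ht).continuousWithinAt)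
    (fun t ht => (hz t (Ico_subset_Icc_self ht)).mono_of_mem_nhdsWithin (Icc_mem_nhdsGE_of_mem ht))
    (by simpa using hza) (fun t => ?_) (fun t ht hzt => ?_)
  · have hlin : HasDerivAt (fun t => (L + 1) * (t - a)) (L + 1) t := by
      simpa using ((hasDerivAt_id t).sub_const a).const_mul (L + 1)
    exact hlin.exp.const_mul r
  · have hle : ‖z t‖ ≤ δ := by
      rw [hzt]
      refine le_trans ?_ hrδ
      gcongr
      exact ht.2.le
    have hpos : 0 < ‖z t‖ := hzt ▸ by positivity
    calc ‖z' t‖ ≤ L * ‖z t‖ := hz' t (Ico_subset_Icc_self ht) hle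
      _ < (L + 1) * ‖z t‖ := by gcongr; exact lt_add_one L
      _ = r * (Real.exp ((L + 1) * (t - a)) * (L + 1)) := by rw [hzt]; ring

theorem eventually_norm_solution_sub_le {f : E → ℝ → E} {h : E → ℝ → E} {u₀ : E}
    {t₀ T L δ : ℝ} (hL : 0 ≤ L) (hδ : 0 < δ)
    (hlip : ∀ t ∈ Icc t₀ T, ∀ x ∈ closedBall (h u₀ t) δ,
      ‖f x t - f (h u₀ t) t‖ ≤ L * ‖x - h u₀ t‖)
    (hode : ∀ᶠ u in 𝓝 u₀, ∀ t ∈ Icc t₀ T, HasDerivWithinAt (h u) (f (h u t) t) (Icc t₀ T) t)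
    (hinit : ∀ᶠ u in 𝓝 u₀, h u t₀ = u) :
    ∀ᶠ u in 𝓝 u₀, ∀ t ∈ Icc t₀ T,
      ‖h u t - h u₀ t‖ ≤ Real.exp ((L + 1) * (T - t₀)) * ‖u - u₀‖ := by
  have hsmall : ∀ᶠ u in 𝓝 u₀, ‖u - u₀‖ * Real.exp ((L + 1) * (T - t₀)) < δ := by
    refine ContinuousAt.eventually_lt (by fun_prop) continuousAt_const ?_
    simpa using hδ
  filter_upwards [hode, hinit, hsmall] with u hu hu_init hu_small t ht
  obtain rfl | hne := eq_or_ne u u₀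
  · simp
  have htube := norm_le_mul_exp_of_norm_deriv_le_of_norm_le (z := fun t => h u t - h u₀ t) hL
    (fun t ht => (hu t ht).sub (hode.self_of_nhds t ht))
    (fun t ht hzt => hlip t ht _ (mem_closedBall_iff_norm.2 hzt))
    (norm_pos_iff.2 (sub_ne_zero.2 hne)) (by rw [hu_init, hinit.self_of_nhds]) hu_small.le t ht
  refine htube.trans ?_
  rw [mul_comm]
  gcongr
  exact ht.2

theorem norm_adjoint_apply_sub_le {A : ℝ → E →L[ℝ] F} {J : ℝ → E →L[ℝ] E} {z z' : ℝ → E}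
    {a b M ρ : ℝ} (hab : a ≤ b)
    (hA : ∀ t ∈ Icc a b, HasDerivWithinAt A (-(A t ∘L J t)) (Icc a b) t)
    (hz : ∀ t ∈ Icc a b, HasDerivWithinAt z (z' t) (Icc a b) t)
    (hM : ∀ t ∈ Icc a b, ‖A t‖ ≤ M) (hρ : ∀ t ∈ Icc a b, ‖z' t - J t (z t)‖ ≤ ρ) :
    ‖A b (z b) - A a (z a)‖ ≤ M * ρ * (b - a) := by
  refine norm_image_sub_le_of_norm_deriv_le_segment' (f := fun t => A t (z t))
    (f' := fun t => A t (z' t - J t (z t))) (fun t ht => ?_) (fun t ht => ?_)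
    b (right_mem_Icc.2 hab)
  · refine ((hA t ht).clm_apply (hz t ht)).congr_deriv ?_
    simp only [_root_.neg_apply, ContinuousLinearMap.comp_apply, map_sub]
    abel
  · have ht := Ico_subset_Icc_self ht
    exact (A t).le_of_opNorm_le_of_le (hM t ht) (hρ t ht)

theorem eventually_norm_linearization_remainder_le {f : E → ℝ → E} {f' : E × ℝ → E →L[ℝ] E}
    {h : E → ℝ → E} {u₀ : E} {t₀ T : ℝ}
    (hf : ∀ t ∈ Icc t₀ T, ∀ᶠ q in 𝓝 (h u₀ t, t), HasFDerivAt (fun x => f x q.2) (f' q) q.1)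
    (hf' : ∀ t ∈ Icc t₀ T, ContinuousAt f' (h u₀ t, t))
    (hode : ∀ᶠ u in 𝓝 u₀, ∀ t ∈ Icc t₀ T, HasDerivWithinAt (h u) (f (h u t) t) (Icc t₀ T) t)
    (hinit : ∀ᶠ u in 𝓝 u₀, h u t₀ = u) {ε : ℝ} (hε : 0 < ε) :
    ∀ᶠ u in 𝓝 u₀, ∀ t ∈ Icc t₀ T,
      ‖f (h u t) t - f (h u₀ t) t - f' (h u₀ t, t) (h u t - h u₀ t)‖ ≤ ε * ‖u - u₀‖ := by
  let γ : ℝ → E × ℝ := fun t => (h u₀ t, t)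
  have hgraph : IsCompact (γ '' Icc t₀ T) := isCompact_Icc.image_of_continuousOn
    (.prodMk (fun t ht => (hode.self_of_nhds t ht).continuousWithinAt) continuousOn_id)
  have hfγ : ∀ p ∈ γ '' Icc t₀ T, ∀ᶠ q in 𝓝 p, HasFDerivAt (fun x => f x q.2) (f' q) q.1 :=
    forall_mem_image.2 fun t ht => hf t ht
  have hfγ' : ∀ p ∈ γ '' Icc t₀ T, ContinuousAt f' p := forall_mem_image.2 fun t ht => hf' t ht
  obtain ⟨L, hL, η, hη, hlip⟩ := exists_forall_norm_sub_le_of_isCompact hgraph hfγ hfγ'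
  have hdep := eventually_norm_solution_sub_le hL hη
    (fun t ht => hlip _ (mem_image_of_mem γ ht)) hode hinit
  set C := Real.exp ((L + 1) * (T - t₀))
  have hC : 0 < C := Real.exp_pos _
  obtain ⟨δ, hδ, htaylor⟩ :=
    exists_forall_norm_sub_sub_le_of_isCompact hgraph hfγ hfγ' (div_pos hε hC)
  have hsmall : ∀ᶠ u in 𝓝 u₀, C * ‖u - u₀‖ < δ :=
    ContinuousAt.eventually_lt (by fun_prop) continuousAt_const (by simpa using hδ)
  filter_upwards [hdep, hsmall] with u hu hu_small t ht
  have hmem : h u t ∈ closedBall (h u₀ t) δ :=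
    mem_closedBall_iff_norm.2 ((hu t ht).trans hu_small.le)
  calc ‖f (h u t) t - f (h u₀ t) t - f' (h u₀ t, t) (h u t - h u₀ t)‖
      ≤ ε / C * ‖h u t - h u₀ t‖ := htaylor _ (mem_image_of_mem γ ht) _ hmem
    _ ≤ ε / C * (C * ‖u - u₀‖) := by gcongr; exact hu t ht
    _ = ε * ‖u - u₀‖ := by field_simp

theorem solution_map_derivative_eq_adjoint_general {f : E → ℝ → E} {f' : E × ℝ → E →L[ℝ] E}
    {h : E → ℝ → E} {u₀ : E} {t₀ T : ℝ} (ht : t₀ ≤ T)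
    (hf : ∀ t ∈ Icc t₀ T, ∀ᶠ q in 𝓝 (h u₀ t, t), HasFDerivAt (fun x => f x q.2) (f' q) q.1)
    (hf' : ∀ t ∈ Icc t₀ T, ContinuousAt f' (h u₀ t, t))
    (hode : ∀ᶠ u in 𝓝 u₀, ∀ t ∈ Icc t₀ T, HasDerivWithinAt (h u) (f (h u t) t) (Icc t₀ T) t)
    (hinit : ∀ᶠ u in 𝓝 u₀, h u t₀ = u) {A : ℝ → E →L[ℝ] F}
    (hA : ∀ t ∈ Icc t₀ T, HasDerivWithinAt A (-(A t ∘L f' (h u₀ t, t))) (Icc t₀ T) t) :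
    HasFDerivAt (fun u => A T (h u T)) (A t₀) u₀ := by
  obtain ⟨M, hM⟩ := isCompact_Icc.exists_bound_of_continuousOn
    fun t ht => (hA t ht).continuousWithinAt
  refine .of_isLittleO (Asymptotics.IsLittleO.of_bound fun c hc => ?_)
  obtain ⟨ε, hε, hεc⟩ := exists_pos_mul_lt hc (M * (T - t₀))
  have hremainder := eventually_norm_linearization_remainder_le hf hf' hode hinit hε
  filter_upwards [hode, hinit, hremainder] with u hu hu_init hu_rem
  have hpairing := norm_adjoint_apply_sub_le ht hA
    (fun t ht => (hu t ht).sub (hode.self_of_nhds t ht)) hM hu_rem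
  calc ‖A T (h u T) - A T (h u₀ T) - A t₀ (u - u₀)‖
      = ‖A T (h u T - h u₀ T) - A t₀ (h u t₀ - h u₀ t₀)‖ := by
        rw [map_sub (A T), hu_init, hinit.self_of_nhds]
    _ ≤ M * (ε * ‖u - u₀‖) * (T - t₀) := hpairing
    _ = M * (T - t₀) * ε * ‖u - u₀‖ := by ring
    _ ≤ c * ‖u - u₀‖ := by gcongr

end SolutionMap

theorem hasDerivWithinAt_toContinuousLinearMap_mulVecLin {𝕜 m n : Type*}
    [NontriviallyNormedField 𝕜] [CompleteSpace 𝕜] [Finite m] [Fintype n]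
    {A : 𝕜 → Matrix m n 𝕜} {A' : Matrix m n 𝕜} {s : Set 𝕜} {t : 𝕜}
    (hA : HasDerivWithinAt A A' s t) :
    HasDerivWithinAt (fun t => LinearMap.toContinuousLinearMap (A t).mulVecLin)
      (LinearMap.toContinuousLinearMap A'.mulVecLin) s t := by
  classical
  cases nonempty_fintype m
  let Φ := (Matrix.toLin' (R := 𝕜) (m := m) (n := n)).trans LinearMap.toContinuousLinearMap
  exact Φ.toLinearMap.toContinuousLinearMap.hasFDerivAt.comp_hasDerivWithinAt t hA

theorem hasDerivWithinAt_neg_mulVecLin_of_adjoint {m n : Type*} [Finite m] [Fintype n]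
    [DecidableEq n] {A : ℝ → Matrix m n ℝ} {J : (n → ℝ) →L[ℝ] (n → ℝ)} {s : Set ℝ} {t : ℝ}
    (hA : HasDerivWithinAt A (-(A t) * LinearMap.toMatrix' (J : (n → ℝ) →ₗ[ℝ] (n → ℝ))) s t) :
    HasDerivWithinAt (fun t => LinearMap.toContinuousLinearMap (-(A t)).mulVecLin)
      (-(LinearMap.toContinuousLinearMap (-(A t)).mulVecLin ∘L J)) s t := by
  cases nonempty_fintype m
  refine (hasDerivWithinAt_toContinuousLinearMap_mulVecLin hA.neg).congr_deriv ?_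
  ext1 v
  simp [LinearMap.toMatrix'_mulVec]

section PartialDerivative

variable {𝕜 E S G : Type*} [NontriviallyNormedField 𝕜] [NormedAddCommGroup E] [NormedSpace 𝕜 E]
  [NormedAddCommGroup S] [NormedSpace 𝕜 S] [NormedAddCommGroup G] [NormedSpace 𝕜 G]
  {f : E → S → G}

theorem hasFDerivAt_fderiv_left_of_contDiff_one (hf : ContDiff 𝕜 1 fun p : E × S => f p.1 p.2)
    (p : E × S) : HasFDerivAt (fun x => f x p.2) (fderiv 𝕜 (fun x => f x p.2) p.1) p.1 :=
  ((hf.comp (contDiff_prodMk_left p.2)).differentiable one_ne_zero p.1).hasFDerivAt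

theorem continuous_fderiv_left_of_contDiff_one (hf : ContDiff 𝕜 1 fun p : E × S => f p.1 p.2) :
    Continuous fun p : E × S => fderiv 𝕜 (fun x => f x p.2) p.1 := by
  have hswap : ContDiff 𝕜 1 (Function.uncurry fun (p : E × S) x => f x p.2) :=
    hf.comp (contDiff_snd.prodMk contDiff_fst.snd)
  exact (hswap.fderiv contDiff_fst (zero_add 1).le).continuous

end PartialDerivative

/-- **The adjoint equation computes the derivative of the solution map.**
Let `h(u, t)` be a `C¹` family of solutions of `h' = f(h, t)` with `h(u, t₀) = u` for `u`
in an open neighborhood `V` of `u₀`, let `J(t)` be the Jacobian of `f` in its first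
argument along the solution through `u₀`, and let `A' = -A·J` on `[t₀, T]` with
`A(T) = -1`. Then the derivative of the time-`T` solution map `u ↦ h(u, T)` at `u₀`
is (multiplication by) the matrix `-A(t₀)`. -/
theorem solution_map_derivative_eq_adjoint (N : ℕ) (hN : 0 < N) (t₀ T : ℝ) (ht : t₀ < T)
    (f : (Fin N → ℝ) → ℝ → (Fin N → ℝ))
    (hf : ContDiff ℝ 1 (fun p : (Fin N → ℝ) × ℝ => f p.1 p.2))
    (h : (Fin N → ℝ) → ℝ → (Fin N → ℝ)) (u₀ : Fin N → ℝ)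
    (V : Set (Fin N → ℝ)) (hV : IsOpen V) (hu₀ : u₀ ∈ V)
    (hreg : ContDiffOn ℝ 1 (fun p : (Fin N → ℝ) × ℝ => h p.1 p.2) (V ×ˢ Set.Icc t₀ T))
    (hode : ∀ u ∈ V, ∀ t ∈ Set.Icc t₀ T,
      HasDerivWithinAt (h u) (f (h u t) t) (Set.Icc t₀ T) t)
    (hinit : ∀ u ∈ V, h u t₀ = u)
    (J : ℝ → Matrix (Fin N) (Fin N) ℝ)
    (hJ : ∀ t : ℝ, J t =
      LinearMap.toMatrix' ((fderiv ℝ (fun u => f u t) (h u₀ t) :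
        (Fin N → ℝ) →L[ℝ] (Fin N → ℝ)) : (Fin N → ℝ) →ₗ[ℝ] (Fin N → ℝ)))
    (A : ℝ → Matrix (Fin N) (Fin N) ℝ)
    (hA : ∀ t ∈ Set.Icc t₀ T, HasDerivWithinAt A (-(A t) * J t) (Set.Icc t₀ T) t)
    (hAT : A T = -1) :
    HasFDerivAt (fun u => h u T)
      (LinearMap.toContinuousLinearMap (Matrix.mulVecLin (-(A t₀)))) u₀ := by
  have hderiv := solution_map_derivative_eq_adjoint_general ht.le
    (fun t _ => .of_forall (hasFDerivAt_fderiv_left_of_contDiff_one hf))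
    (fun t _ => (continuous_fderiv_left_of_contDiff_one hf).continuousAt)
    ((hV.eventually_mem hu₀).mono hode) ((hV.eventually_mem hu₀).mono hinit)
    (fun t ht => hasDerivWithinAt_neg_mulVecLin_of_adjoint (hJ t ▸ hA t ht))
  exact hderiv.congr_of_eventuallyEq (.of_forall fun u => by simp [hAT])
end

section
/- Let R be a commutative ring, n a positive integer, J, F ∈ Matrix (Fin n) (Fin n) R, and δ ∈ R. Let H := fromBlocks(0, J, F, δ•1) ∈ Matrix (Fin n ⊕ Fin n) (Fin n ⊕ Fin n) R. Then for every λ ∈ R, det( λ•1 − H ) = det( (λ·(λ − δ))•1 − J·F ), where the identity matrices on the left and right are of sizes 2n and n respectively. -/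
open Matrix

/-!
Let `M` be the block matrix with rows `(A, B)` and `(C, D)`, where `C` and `D` commute. Multiplying
`M` on the right by the block matrix with rows `(D, 0)` and `(-C, 1)` clears its lower left corner
and gives `det M * det D = det (A * D - B * C) * det D`. To cancel `det D`, replace `D` by `X + D`
over `R[X]`, whose determinant is monic, and then set `X = 0`.
-/

section CommutingBlocks

variable {n R : Type*} [Fintype n] [DecidableEq n] [CommRing R] {C D : Matrix n n R}

theorem det_fromBlocks_mul_det_of_commute (A B : Matrix n n R) (h : Commute C D) :
    (fromBlocks A B C D).det * D.det = (A * D - B * C).det * D.det := by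
  have clear_corner : fromBlocks A B C D * fromBlocks D 0 (-C) 1 =
      fromBlocks (A * D - B * C) B 0 D := by
    simp [fromBlocks_multiply, h.eq, sub_eq_add_neg]
  simpa only [det_mul, det_fromBlocks_zero₁₂, det_fromBlocks_zero₂₁, det_one, mul_one] using
    congrArg det clear_corner

theorem det_fromBlocks_of_commute (A B : Matrix n n R) (h : Commute C D) :
    (fromBlocks A B C D).det = (A * D - B * C).det := by
  let ι : Matrix n n R →+* Matrix n n (Polynomial R) := Polynomial.C.mapMatrix
  let ev : Polynomial R →+* R := Polynomial.evalRingHom 0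
  let D' : Matrix n n (Polynomial R) := charmatrix (-D)
  have ev_ι (M : Matrix n n R) : ev.mapMatrix (ι M) = M := by
    ext; simp [ev, ι]
  have ev_D' : ev.mapMatrix D' = D := by
    ext i j; simp [ev, D', charmatrix_apply, diagonal_apply, apply_ite]
  have commute_D' : Commute (ι C) D' :=
    (scalar_commute _ (Commute.all _) _).symm.sub_right (h.neg_right.map ι)
  have det_eq : (fromBlocks (ι A) (ι B) (ι C) D').det = (ι A * D' - ι B * ι C).det :=
    (charpoly_monic (-D)).isRegular.right
      (det_fromBlocks_mul_det_of_commute (ι A) (ι B) commute_D')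
  have ev_blocks : ev.mapMatrix (fromBlocks (ι A) (ι B) (ι C) D') = fromBlocks A B C D := by
    rw [RingHom.mapMatrix_apply, fromBlocks_map]
    simp only [← RingHom.mapMatrix_apply, ev_ι, ev_D']
  simpa only [RingHom.map_det, ev_blocks, map_sub, map_mul, ev_ι, ev_D'] using congrArg ev det_eq

end CommutingBlocks

theorem hbnode_block_char_det_general {n R : Type*} [Fintype n] [DecidableEq n] [CommRing R]
    (J : Matrix n n R) {F D : Matrix n n R} (h : Commute F D) (l : R) :
    (l • (1 : Matrix (n ⊕ n) (n ⊕ n) R) - fromBlocks 0 J F D).det =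
      (l • (l • (1 : Matrix n n R) - D) - J * F).det := by
  have commute_blocks : Commute (-F) (l • (1 : Matrix n n R) - D) :=
    (((Commute.one_right F).smul_right l).sub_right h).neg_left
  have blocks : l • (1 : Matrix (n ⊕ n) (n ⊕ n) R) - fromBlocks 0 J F D =
      fromBlocks (l • 1) (-J) (-F) (l • 1 - D) := by
    rw [← fromBlocks_one, fromBlocks_smul, sub_eq_add_neg, fromBlocks_neg, fromBlocks_add]
    simp only [smul_zero, neg_zero, add_zero, zero_sub, ← sub_eq_add_neg]
  rw [blocks, det_fromBlocks_of_commute _ _ commute_blocks, smul_one_mul, neg_mul_neg]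

/-- **Characteristic determinant identity for the (G)HBNODE block matrix.**
For `H = fromBlocks(0, J, F, δ•1)` over a commutative ring,
`det(λ•1 - H) = det((λ(λ - δ))•1 - J·F)`. -/
theorem hbnode_block_char_det (R : Type*) [CommRing R] (n : ℕ) (hn : 0 < n)
    (J F : Matrix (Fin n) (Fin n) R) (δ : R)
    (H : Matrix (Fin n ⊕ Fin n) (Fin n ⊕ Fin n) R)
    (hH : H = Matrix.fromBlocks 0 J F (δ • (1 : Matrix (Fin n) (Fin n) R))) :
    ∀ l : R,
      (l • (1 : Matrix (Fin n ⊕ Fin n) (Fin n ⊕ Fin n) R) - H).det =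
        ((l * (l - δ)) • (1 : Matrix (Fin n) (Fin n) R) - J * F).det := by
  intro l
  rw [hH, hbnode_block_char_det_general J ((Commute.one_right F).smul_right δ),
    ← sub_smul, smul_smul]
end

section
/- Let n be a positive integer, J, F ∈ Matrix (Fin n) (Fin n) ℂ, δ ∈ ℂ, and H := fromBlocks(0, J, F, δ•1) ∈ Matrix (Fin n ⊕ Fin n) (Fin n ⊕ Fin n) ℂ. Then there exist μ₁, …, μₙ ∈ ℂ (the eigenvalues of J·F with multiplicity) such that the characteristic polynomial of H equals ∏_{i=1}^{n} (X² − δ·X − μᵢ). Consequently, the 2n eigenvalues of H counted with multiplicity can be partitioned into n pairs such that the sum of each pair equals δ. -/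
open Matrix Polynomial

/-!
Multiplying `fromBlocks A J F (y • 1)` on the right by `fromBlocks (y • 1) 0 (-F) 1` makes it block
upper triangular. Applied to the characteristic matrix of `H`, after cancelling powers of the monic
polynomial `X - C δ`, this gives `H.charpoly = (J * F).charpoly.comp (X * (X - C δ))`. So every
eigenvalue `μ` of `J * F` contributes the two roots of `X ^ 2 - δ X - μ`, whose sum is `δ`.
-/

section BlockCharpoly

variable {R m n : Type*} [CommRing R] [Fintype m] [DecidableEq m] [Fintype n] [DecidableEq n]

lemma pow_card_mul_det_fromBlocks_smul_one (A : Matrix m m R) (J : Matrix m n R)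
    (F : Matrix n m R) (y : R) :
    y ^ Fintype.card m * (fromBlocks A J F (y • 1)).det =
      y ^ Fintype.card n * (y • A - J * F).det := by
  have triangularize : fromBlocks A J F (y • 1) * fromBlocks (y • 1) 0 (-F) 1 =
      fromBlocks (y • A - J * F) J 0 (y • 1) := by
    simp [fromBlocks_multiply, sub_eq_add_neg]
  simpa [det_mul, det_smul, mul_comm] using congrArg det triangularize

lemma charmatrix_smul_one (a : R) :
    charmatrix (a • (1 : Matrix n n R)) = (X - C a) • (1 : Matrix n n R[X]) := by
  rw [smul_one_eq_diagonal, charmatrix_diagonal, smul_one_eq_diagonal]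

lemma charpoly_comp_eq_det (M : Matrix n n R) (q : R[X]) :
    M.charpoly.comp q = (q • 1 - M.map C).det := by
  rw [smul_one_eq_diagonal, ← scalar_apply, ← eval_charpoly, charpoly_map, eval_map,
    Polynomial.comp]

lemma pow_card_mul_charpoly_fromBlocks_smul_one (J : Matrix m n R) (F : Matrix n m R) (a d : R) :
    (X - C d) ^ Fintype.card m * (fromBlocks (a • 1) J F (d • 1)).charpoly =
      (X - C d) ^ Fintype.card n * (J * F).charpoly.comp ((X - C a) * (X - C d)) := by
  rw [charpoly, charmatrix_fromBlocks, charmatrix_smul_one, charmatrix_smul_one,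
    pow_card_mul_det_fromBlocks_smul_one, charpoly_comp_eq_det, smul_smul, Matrix.neg_mul,
    Matrix.mul_neg, neg_neg, Matrix.map_mul, mul_comm (X - C d)]

lemma charpoly_fromBlocks_smul_one (J F : Matrix n n R) (a d : R) :
    (fromBlocks (a • 1) J F (d • 1)).charpoly =
      (J * F).charpoly.comp ((X - C a) * (X - C d)) :=
  ((monic_X_sub_C d).pow _).isRegular.left (pow_card_mul_charpoly_fromBlocks_smul_one J F a d)

lemma charpoly_fromBlocks_zero_smul_one (J F : Matrix n n R) (d : R) :
    (fromBlocks 0 J F (d • 1)).charpoly = (J * F).charpoly.comp (X ^ 2 - C d * X) := by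
  have h := charpoly_fromBlocks_smul_one J F 0 d
  rwa [zero_smul, C_0, sub_zero, mul_sub, ← sq, X_mul_C] at h

end BlockCharpoly

lemma exists_eq_prod_X_sub_C_of_splits {R ι : Type*} [CommRing R] [Nontrivial R] [Fintype ι]
    {p : R[X]} (hp : p.Splits) (hmonic : p.Monic) (hdeg : p.natDegree = Fintype.card ι) :
    ∃ μ : ι → R, p = ∏ i, (X - C (μ i)) := by
  classical
  obtain ⟨s, hs⟩ := splits_iff_exists_multiset.1 hp
  rw [hmonic.leadingCoeff, C_1, one_mul] at hs
  have hcard : Fintype.card ι = Fintype.card s := by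
    rw [← hdeg, hs, natDegree_multiset_prod_X_sub_C_eq_card, Multiset.card_coe]
  let e : ι ≃ s := Fintype.equivOfCardEq hcard
  refine ⟨fun i ↦ (e i).1, ?_⟩
  calc p = (s.map (X - C ·)).prod := hs
    _ = ∏ r : s, (X - C r.1) := by rw [← Multiset.map_univ]; rfl
    _ = ∏ i, (X - C (e i).1) := (e.prod_comp fun r ↦ X - C r.1).symm

lemma splits_of_splits_comp {R : Type*} [CommRing R] [IsDomain R] {p q : R[X]}
    (hq : q.natDegree ≠ 0) (h : (p.comp q).Splits) : p.Splits := by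
  let K := FractionRing R
  let φ := (algebraMap K (AlgebraicClosure K)).comp (algebraMap R K)
  have hφ : Function.Injective φ :=
    (algebraMap K (AlgebraicClosure K)).injective.comp (IsFractionRing.injective R K)
  rcases eq_or_ne p 0 with rfl | hp
  · exact Splits.zero
  have hpq : p.comp q ≠ 0 := by
    rw [Ne, comp_eq_zero_iff]
    rintro (hp_zero | ⟨-, hconst⟩)
    · exact hp hp_zero
    · exact hq (hconst ▸ natDegree_C _)
  -- A root of `p` over the algebraic closure is the value of `q` at some root of `p.comp q`, and
  -- the roots of `p.comp q` all come from `R`.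
  refine (IsAlgClosed.splits (p.map φ)).of_splits_map_of_injective hφ fun a ha ↦ ?_
  obtain ⟨b, hb⟩ : ∃ b, (q.map φ).eval b = a :=
    IsAlgClosed.eval_surjective (by rwa [natDegree_map_eq_of_injective hφ]) a
  have hb_root : b ∈ ((p.comp q).map φ).roots := by
    rw [mem_roots ((Polynomial.map_ne_zero_iff hφ).2 hpq), Polynomial.map_comp, IsRoot, eval_comp,
      hb]
    exact isRoot_of_mem_roots ha
  rw [h.roots_map_of_injective hφ, Multiset.mem_map] at hb_root
  obtain ⟨c, -, rfl⟩ := hb_root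
  exact ⟨q.eval c, by rw [← hb, eval_map_apply]⟩

lemma exists_add_eq_and_quadratic_eq_mul_of_splits {R : Type*} [CommRing R] [Nontrivial R] {d c : R}
    (h : (X ^ 2 - C d * X - C c).Splits) :
    ∃ a b, a + b = d ∧ X ^ 2 - C d * X - C c = (X - C a) * (X - C b) := by
  have hdeg : (X ^ 2 - C d * X - C c).degree = 2 := by compute_degree!
  obtain ⟨r, hr⟩ := h.exists_eval_eq_zero (hdeg.trans_ne two_ne_zero)
  have hc : c = r ^ 2 - d * r := by
    simp only [eval_sub, eval_mul, eval_pow, eval_X, eval_C] at hr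
    linear_combination -hr
  refine ⟨r, d - r, add_sub_cancel r d, ?_⟩
  simp only [hc, C_sub, C_mul, C_pow]
  ring

theorem hbnode_block_eigenvalue_pairing_general {R ι : Type*} [CommRing R] [IsDomain R]
    [Fintype ι] [DecidableEq ι] (J F : Matrix ι ι R) (δ : R) (H : Matrix (ι ⊕ ι) (ι ⊕ ι) R)
    (hH : H = fromBlocks 0 J F (δ • (1 : Matrix ι ι R))) (hsplits : H.charpoly.Splits) :
    (∃ μ : ι → R,
      (J * F).charpoly = ∏ i, (X - C (μ i)) ∧
      H.charpoly = ∏ i, (X ^ 2 - C δ * X - C (μ i))) ∧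
    (∃ ν : ι → R × R, (∀ i, (ν i).1 + (ν i).2 = δ) ∧
      H.charpoly = ∏ i, ((X - C (ν i).1) * (X - C (ν i).2))) := by
  have hcomp : H.charpoly = (J * F).charpoly.comp (X ^ 2 - C δ * X) :=
    hH ▸ charpoly_fromBlocks_zero_smul_one J F δ
  have hdeg : (X ^ 2 - C δ * X).natDegree = 2 := by compute_degree!
  have hJF : (J * F).charpoly.Splits :=
    splits_of_splits_comp (hdeg.trans_ne two_ne_zero) (hcomp ▸ hsplits)
  obtain ⟨μ, hμ⟩ := exists_eq_prod_X_sub_C_of_splits hJF (charpoly_monic _)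
    (charpoly_natDegree_eq_dim _)
  have hHμ : H.charpoly = ∏ i, (X ^ 2 - C δ * X - C (μ i)) := by
    simp only [hcomp, hμ, prod_comp, sub_comp, X_comp, C_comp]
  have hquad (i : ι) : (X ^ 2 - C δ * X - C (μ i)).Splits :=
    hsplits.of_dvd H.charpoly_monic.ne_zero
      (hHμ ▸ Finset.dvd_prod_of_mem _ (Finset.mem_univ i))
  choose a b hab hfactor using fun i ↦ exists_add_eq_and_quadratic_eq_mul_of_splits (hquad i)
  exact ⟨⟨μ, hμ, hHμ⟩, fun i ↦ (a i, b i), hab,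
    hHμ.trans (Finset.prod_congr rfl fun i _ ↦ hfactor i)⟩

/-- **Eigenvalue pairing for the (G)HBNODE block matrix.**
For `H = fromBlocks(0, J, F, δ•1)` over `ℂ`, there are `μ₁, …, μₙ` (the eigenvalues of
`J·F` with multiplicity) such that `charpoly H = ∏ᵢ (X² - δX - μᵢ)`; consequently the
`2n` eigenvalues of `H` (with multiplicity) can be partitioned into `n` pairs, each pair
summing to `δ`. -/
theorem hbnode_block_eigenvalue_pairing (n : ℕ) (hn : 0 < n)
    (J F : Matrix (Fin n) (Fin n) ℂ) (δ : ℂ)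
    (H : Matrix (Fin n ⊕ Fin n) (Fin n ⊕ Fin n) ℂ)
    (hH : H = Matrix.fromBlocks 0 J F (δ • (1 : Matrix (Fin n) (Fin n) ℂ))) :
    (∃ μ : Fin n → ℂ,
      (J * F).charpoly = ∏ i, (X - C (μ i)) ∧
      H.charpoly = ∏ i, (X ^ 2 - C δ * X - C (μ i))) ∧
    (∃ ν : Fin n → ℂ × ℂ, (∀ i, (ν i).1 + (ν i).2 = δ) ∧
      H.charpoly = ∏ i, ((X - C (ν i).1) * (X - C (ν i).2))) :=
  hbnode_block_eigenvalue_pairing_general J F δ H hH (IsAlgClosed.splits _)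
end
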